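/- There exists a threshold N such that the following holds for all integers r, h ≥ N satisfying min{r+1, h} ≥ 10·(ln max{r+1, h})². Let A be a finite nonempty subset of an abelian group, let K be a real number with |A+A| = K·|A|, and let λ₁, …, λ_h be nonzero integers with |λᵢ| ≤ 2^r for every i. Then |λ₁·A + λ₂·A + … + λ_h·A| ≤ K^(7rh/ln(r+h)) · |A|. -/

import Mathlib

open Pointwise

/-- The dilate `λ · A = {λa : a ∈ A}` of a finite set in an abelian group. -/
def dilate {G : Type} [AddCommGroup G] [DecidableEq G] (l : ℤ) (A : Finset G) : Finset G :=
  A.image fun a => l • a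

/-!
Write each `λᵢ` as `±∑ 2 ^ j` over its binary digits and record the digits in a bit matrix with
`h` rows and `r + 1` columns. Cutting the shorter side of the matrix into blocks of size `k` and
grouping the lines of the longer side by their pattern on each block splits the matrix into few
combinatorial rectangles `X × Y` of small total perimeter `∑ (|X| + |Y|)`. Each rectangle
contributes `(∑ j ∈ Y, 2 ^ j) · (±A ± ⋯ ± A)` with `|X|` summands, which Plünnecke's inequality and
Ruzsa's covering lemma cover by `K ^ (|X| + 1)` translates of `(∑ j ∈ Y, 2 ^ j) · (A - A)`. These
dilates of `A - A` are split again into powers of two and evaluated by Horner's rule, where a digit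
`j` lying in `n` of the sets `Y` costs another factor `K ^ (2 * n + 5)`. The exponent of `K` is thus
governed by the perimeter, and `k ≈ ½ log₂ max (r + 1) h` makes it `O(r h / log (r + h))`.
-/

open scoped Finset

section Covering

lemma covByVAdd_add_right {M : Type*} [AddMonoid M] {K : ℝ} {A B : Set M}
    (h : CovByVAdd M K A B) (C : Set M) : CovByVAdd M K (A + C) (B + C) := by
  obtain ⟨F, hF, hAB⟩ := h
  exact ⟨F, hF, (Set.add_subset_add_right hAB).trans_eq (vadd_add_assoc _ _ _)⟩

lemma covByVAdd_sum {M ι : Type*} [AddCommMonoid M] {s : Finset ι} {K : ι → ℝ}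
    {A B : ι → Set M} (h : ∀ i ∈ s, CovByVAdd M (K i) (A i) (B i)) :
    CovByVAdd M (∏ i ∈ s, K i) (∑ i ∈ s, A i) (∑ i ∈ s, B i) := by
  classical
  induction s using Finset.induction_on with
  | empty => simp
  | insert i s hi ih =>
    obtain ⟨hi', hs⟩ := Finset.forall_mem_insert .. |>.1 h
    rw [Finset.prod_insert hi, Finset.sum_insert hi, Finset.sum_insert hi, add_comm (B i)]
    refine (covByVAdd_add_right hi' _).trans ?_
    rw [add_comm (B i)]
    exact covByVAdd_add_right (ih hs) _

lemma covByVAdd_smul {R G : Type*} [AddMonoid G] [DistribSMul R G] {K : ℝ}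
    {A B : Set G} (h : CovByVAdd G K A B) (c : R) : CovByVAdd G K (c • A) (c • B) := by
  classical
  obtain ⟨F, hF, hAB⟩ := h
  refine ⟨c • F, le_trans (mod_cast Finset.card_image_le) hF, ?_⟩
  calc c • A ⊆ c • ((F : Set G) + B) := Set.smul_set_mono hAB
    _ = ((c • F : Finset G) : Set G) +ᵥ c • B := by
      rw [smul_add, Finset.coe_smul_finset, vadd_eq_add]

lemma card_le_mul_card_of_covByVAdd {M X : Type*} [AddMonoid M] [AddAction M X] {K : ℝ}
    {A B : Finset X} (h : CovByVAdd M K (A : Set X) B) : (#A : ℝ) ≤ K * #B := by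
  classical
  obtain ⟨F, hF, hAB⟩ := h
  calc (#A : ℝ) ≤ #(F +ᵥ B) := mod_cast Finset.card_le_card (mod_cast hAB)
    _ ≤ #F * #B := mod_cast Finset.card_vadd_le
    _ ≤ K * #B := by gcongr

-- Horner's rule: the `B j` are absorbed one at a time, from the highest power of `θ` down.
lemma covByVAdd_sum_pow_smul {R G : Type*} [Monoid R] [AddCommGroup G] [DistribMulAction R G]
    (θ : R) {D : Set G} (hD : D.Nonempty) (m : ℕ) {K : ℕ → ℝ} {B : ℕ → Set G}
    (h : ∀ j, CovByVAdd G (K j) (B j + θ • D) D) :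
    CovByVAdd G (∏ j ∈ Finset.range m, K j) (∑ j ∈ Finset.range m, θ ^ j • B j) D := by
  induction m generalizing K B with
  | zero =>
    obtain ⟨d, hd⟩ := hD
    exact ⟨{-d}, by simp, by simpa [Set.mem_neg_vadd_set_iff] using hd⟩
  | succ m ih =>
    have hshift : ∑ j ∈ Finset.range m, θ ^ (j + 1) • B (j + 1) =
        θ • ∑ j ∈ Finset.range m, θ ^ j • B (j + 1) := by
      simp only [Finset.smul_sum, smul_smul, pow_succ']
    rw [Finset.prod_range_succ', Finset.sum_range_succ', hshift, pow_zero, one_smul]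
    refine (covByVAdd_add_right (covByVAdd_smul (ih fun j => h (j + 1)) θ) (B 0)).trans ?_
    rw [add_comm]
    exact h 0

end Covering

section Doubling

-- Here `n • A` with `n : ℕ` is an iterated sumset, whereas `c • A` with `c` in a ring is a dilate.
variable {G : Type*} [AddCommGroup G] [DecidableEq G] {A : Finset G} {K : ℝ}

lemma card_nsmul_sub_nsmul_le (hA : A.Nonempty) (hK : (#(A + A) : ℝ) ≤ K * #A) (s t : ℕ) :
    (#(s • A - t • A) : ℝ) ≤ K ^ (s + t) * #A := by
  have hratio : (#(A + A) / #A : ℝ) ≤ K := (div_le_iff₀ (mod_cast hA.card_pos)).2 hK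
  calc (#(s • A - t • A) : ℝ) ≤ (#(A + A) / #A) ^ (s + t) * #A := by
        simpa using (NNRat.cast_le (K := ℝ)).2
          (Finset.pluennecke_ruzsa_inequality_nsmul_sub_nsmul_add hA A s t)
    _ ≤ K ^ (s + t) * #A := by gcongr

lemma covByVAdd_nsmul_sub_nsmul (hA : A.Nonempty) (hK : (#(A + A) : ℝ) ≤ K * #A) (s t : ℕ) :
    CovByVAdd G (K ^ (s + t + 1)) ((s • A - t • A : Finset G) : Set G) (A - A : Finset G) := by
  have hshift : s • A - t • A + A = (s + 1) • A - t • A := by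
    rw [succ_nsmul, sub_add_eq_add_sub]
  obtain ⟨F, -, hF, hcover⟩ := Finset.ruzsa_covering_add (A := s • A - t • A) hA (by
    rw [hshift]
    exact card_nsmul_sub_nsmul_le hA hK (s + 1) t)
  rw [Nat.add_right_comm] at hF
  exact ⟨F, hF, by simpa using Finset.coe_subset.2 hcover⟩

variable {R : Type*} [Ring R] [Module R G]

lemma exists_sum_smul_eq_nsmul_sub_nsmul {ι : Type*} (A : Finset G) (s : Finset ι) {σ : ι → R}
    (hσ : ∀ i, σ i = 1 ∨ σ i = -1) :
    ∃ p n : ℕ, p + n = #s ∧ ∑ i ∈ s, σ i • A = p • A - n • A := by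
  classical
  induction s using Finset.induction_on with
  | empty => exact ⟨0, 0, by simp⟩
  | insert i s hi ih =>
    obtain ⟨p, n, hpn, hsum⟩ := ih
    rw [Finset.sum_insert hi, hsum, Finset.card_insert_of_notMem hi, ← hpn]
    rcases hσ i with h | h
    · exact ⟨p + 1, n, by ring, by rw [h, one_smul, succ_nsmul', add_sub_assoc]⟩
    · refine ⟨p, n + 1, by ring, ?_⟩
      rw [h, Finset.neg_smul_finset, one_smul, succ_nsmul', sub_add_eq_sub_sub, sub_right_comm,
        sub_eq_neg_add _ A]

end Doubling

section DilateSums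

variable {R G : Type*} [Semiring R] [AddCommMonoid G] [Module R G]

lemma sum_smul_subset_sum_smul {ι : Type*} (s : Finset ι) (c : ι → R) (B : Set G) :
    (∑ i ∈ s, c i) • B ⊆ ∑ i ∈ s, c i • B := by
  classical
  induction s using Finset.induction_on with
  | empty => simpa using Set.zero_smul_set_subset B
  | insert i s hi ih =>
    rw [Finset.sum_insert hi, Finset.sum_insert hi]
    exact (Set.add_smul_subset _ _ _).trans (Set.add_subset_add_left ih)

lemma sum_sum_smul_subset_sum_smul_nsmul {β κ : Type*} [DecidableEq β] {T : Finset β}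
    {Q : Finset κ} {Y : κ → Finset β} (hY : ∀ q ∈ Q, Y q ⊆ T) (c : β → R) (B : Set G) :
    ∑ q ∈ Q, (∑ b ∈ Y q, c b) • B ⊆ ∑ b ∈ T, c b • (#{q ∈ Q | b ∈ Y q} • B) := by
  calc ∑ q ∈ Q, (∑ b ∈ Y q, c b) • B
      ⊆ ∑ q ∈ Q, ∑ b ∈ Y q, c b • B :=
        Set.finsetSum_subset_finsetSum _ _ _ fun q _ => sum_smul_subset_sum_smul _ _ _
    _ = ∑ b ∈ T, ∑ q ∈ Q with b ∈ Y q, c b • B := by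
        refine Finset.sum_comm' fun q b => ?_
        rw [Finset.mem_filter]
        exact ⟨fun ⟨hq, hb⟩ => ⟨⟨hq, hb⟩, hY q hq hb⟩, fun ⟨h, _⟩ => h⟩
    _ = ∑ b ∈ T, c b • (#{q ∈ Q | b ∈ Y q} • B) := by
        simp only [← Finset.smul_sum, Finset.sum_const]

end DilateSums

/-- A partition of the bipartite graph of `r` between `S` and `T` into bicliques: every `r`-edge
from `S` to `T` lies in exactly one of the rectangles `X q ×ˢ Y q`, `q ∈ Q`, and these rectangles
contain only edges. The index set `Q` is explicit so that different indices may carry the same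
rectangle. -/
structure IsBicliquePartition {α β κ : Type*} (r : α → β → Prop) (S : Finset α) (T : Finset β)
    (Q : Finset κ) (X : κ → Finset α) (Y : κ → Finset β) : Prop where
  left_subset : ∀ q ∈ Q, X q ⊆ S
  right_subset : ∀ q ∈ Q, Y q ⊆ T
  rel : ∀ q ∈ Q, ∀ a ∈ X q, ∀ b ∈ Y q, r a b
  existsUnique : ∀ a ∈ S, ∀ b ∈ T, r a b → ∃! q, q ∈ Q ∧ a ∈ X q ∧ b ∈ Y q

namespace IsBicliquePartition

variable {α β κ : Type*} {r : α → β → Prop} {S : Finset α} {T : Finset β} {Q : Finset κ}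
  {X : κ → Finset α} {Y : κ → Finset β}

lemma swap (h : IsBicliquePartition r S T Q X Y) :
    IsBicliquePartition (fun b a => r a b) T S Q Y X where
  left_subset := h.right_subset
  right_subset := h.left_subset
  rel q hq b hb a ha := h.rel q hq a ha b hb
  existsUnique b hb a ha hab := by
    simpa only [and_comm (a := a ∈ _)] using h.existsUnique a ha b hb hab

lemma sum_filter_rel [DecidableEq α] [∀ a, DecidablePred (r a)]
    (h : IsBicliquePartition r S T Q X Y) {M : Type*} [AddCommMonoid M] {a : α} (ha : a ∈ S)
    (f : β → M) :
    ∑ b ∈ T with r a b, f b = ∑ q ∈ Q with a ∈ X q, ∑ b ∈ Y q, f b := by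
  classical
  have hdisj : (({q ∈ Q | a ∈ X q} : Finset κ) : Set κ).PairwiseDisjoint Y := by
    intro q hq q' hq' hne
    rw [Finset.mem_coe, Finset.mem_filter] at hq hq'
    refine Finset.disjoint_left.2 fun b hb hb' => hne ?_
    exact (h.existsUnique a ha b (h.right_subset q hq.1 hb) (h.rel q hq.1 a hq.2 b hb)).unique
      ⟨hq.1, hq.2, hb⟩ ⟨hq'.1, hq'.2, hb'⟩
  rw [← Finset.sum_biUnion hdisj]
  congr 1
  ext b
  simp only [Finset.mem_filter, Finset.mem_biUnion]
  constructor
  · rintro ⟨hb, hab⟩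
    obtain ⟨q, ⟨hq, haq, hbq⟩, -⟩ := h.existsUnique a ha b hb hab
    exact ⟨q, ⟨hq, haq⟩, hbq⟩
  · rintro ⟨q, ⟨hq, haq⟩, hbq⟩
    exact ⟨h.right_subset q hq hbq, h.rel q hq a haq b hbq⟩

variable {R G : Type*} [Semiring R] [AddCommMonoid G] [Module R G]

lemma sum_smul_subset [∀ a, DecidablePred (r a)] (h : IsBicliquePartition r S T Q X Y)
    (c : β → R) (σ : α → R) (B : Set G) :
    ∑ a ∈ S, ((∑ b ∈ T with r a b, c b) * σ a) • B ⊆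
      ∑ q ∈ Q, (∑ b ∈ Y q, c b) • ∑ a ∈ X q, σ a • B := by
  classical
  calc ∑ a ∈ S, ((∑ b ∈ T with r a b, c b) * σ a) • B
      ⊆ ∑ a ∈ S, ∑ q ∈ Q with a ∈ X q, (∑ b ∈ Y q, c b) • σ a • B := by
        refine Set.finsetSum_subset_finsetSum _ _ _ fun a ha => ?_
        rw [mul_smul, h.sum_filter_rel ha]
        exact sum_smul_subset_sum_smul _ _ _
    _ = ∑ q ∈ Q, ∑ a ∈ X q, (∑ b ∈ Y q, c b) • σ a • B := by
        refine Finset.sum_comm' fun a q => ?_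
        rw [Finset.mem_filter]
        exact ⟨fun ⟨_, hq, ha⟩ => ⟨ha, hq⟩, fun ⟨ha, hq⟩ => ⟨h.left_subset q hq ha, hq, ha⟩⟩
    _ = ∑ q ∈ Q, (∑ b ∈ Y q, c b) • ∑ a ∈ X q, σ a • B := by simp only [Finset.smul_sum]

end IsBicliquePartition

section BicliqueBound

lemma sum_card_filter_mem {β κ : Type*} [DecidableEq β] {T : Finset β} {Q : Finset κ}
    {Y : κ → Finset β} (hY : ∀ q ∈ Q, Y q ⊆ T) :
    ∑ b ∈ T, #{q ∈ Q | b ∈ Y q} = ∑ q ∈ Q, #(Y q) := by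
  calc ∑ b ∈ T, #{q ∈ Q | b ∈ Y q} = ∑ q ∈ Q, #{b ∈ T | b ∈ Y q} :=
        (Finset.sum_card_bipartiteAbove_eq_sum_card_bipartiteBelow fun q b => b ∈ Y q).symm
    _ = ∑ q ∈ Q, #(Y q) := Finset.sum_congr rfl fun q hq => by
        rw [Finset.filter_mem_eq_inter, Finset.inter_eq_right.2 (hY q hq)]

variable {R G : Type*} [Ring R] [AddCommGroup G] [Module R G] [DecidableEq G] {A : Finset G}
  {K : ℝ}

lemma covByVAdd_sum_smul_of_eq_one_or_neg_one {ι : Type*} (hA : A.Nonempty)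
    (hK : (#(A + A) : ℝ) ≤ K * #A) (s : Finset ι) {σ : ι → R} (hσ : ∀ i, σ i = 1 ∨ σ i = -1) :
    CovByVAdd G (K ^ (#s + 1)) (∑ i ∈ s, σ i • (A : Set G)) (A - A) := by
  obtain ⟨p, n, hpn, hsum⟩ := exists_sum_smul_eq_nsmul_sub_nsmul A s hσ
  rw [← hpn]
  convert covByVAdd_nsmul_sub_nsmul hA hK p n using 1
  · rw [← hsum]; push_cast; rfl
  · push_cast; rfl

lemma covByVAdd_sum_two_pow_smul_nsmul (hA : A.Nonempty) (hK : (#(A + A) : ℝ) ≤ K * #A)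
    (m : ℕ) (n : ℕ → ℕ) :
    CovByVAdd G (K ^ ∑ j ∈ Finset.range m, (2 * n j + 5))
      (∑ j ∈ Finset.range m, (2 : R) ^ j • (n j • (A - A : Set G))) (A - A) := by
  rw [← Finset.prod_pow_eq_pow_sum]
  refine covByVAdd_sum_pow_smul _ ?_ _ fun j => ?_
  · exact (Finset.coe_nonempty.2 hA).sub (Finset.coe_nonempty.2 hA)
  have htwo : (2 : R) • (A - A : Set G) ⊆ 2 • (A - A : Set G) := by
    rw [← one_add_one_eq_two, two_nsmul]
    simpa only [one_smul] using Set.add_smul_subset (1 : R) 1 (A - A : Set G)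
  have hcov := covByVAdd_nsmul_sub_nsmul hA hK (n j + 2) (n j + 2)
  have hexp : n j + 2 + (n j + 2) + 1 = 2 * n j + 5 := by ring
  rw [hexp, ← nsmul_sub, Finset.coe_nsmul, Finset.coe_sub] at hcov
  refine hcov.subset_left ?_
  rw [add_nsmul]
  exact Set.add_subset_add_left htwo

theorem card_sum_smul_le_of_isBicliquePartition {ι κ : Type*} {r : ι → ℕ → Prop}
    [∀ i, DecidablePred (r i)] {S : Finset ι} {m : ℕ} {Q : Finset κ} {X : κ → Finset ι}
    {Y : κ → Finset ℕ} (hP : IsBicliquePartition r S (Finset.range m) Q X Y)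
    (hA : A.Nonempty) (hK : (#(A + A) : ℝ) ≤ K * #A) {σ : ι → R} (hσ : ∀ i, σ i = 1 ∨ σ i = -1) :
    (#(∑ i ∈ S, ((∑ j ∈ Finset.range m with r i j, 2 ^ j) * σ i) • A) : ℝ) ≤
      K ^ (∑ q ∈ Q, (#(X q) + 1 + 2 * #(Y q)) + 5 * m + 2) * #A := by
  classical
  let n : ℕ → ℕ := fun j => #{q ∈ Q | j ∈ Y q}
  have hn : ∑ j ∈ Finset.range m, (2 * n j + 5) = ∑ q ∈ Q, 2 * #(Y q) + 5 * m := by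
    rw [Finset.sum_add_distrib, ← Finset.mul_sum, ← Finset.mul_sum,
      sum_card_filter_mem hP.right_subset, Finset.sum_const, Finset.card_range, smul_eq_mul,
      mul_comm m]
  have hblocks : CovByVAdd G (∏ q ∈ Q, K ^ (#(X q) + 1))
      (∑ q ∈ Q, (∑ j ∈ Y q, (2 : R) ^ j) • ∑ i ∈ X q, σ i • (A : Set G))
      (∑ q ∈ Q, (∑ j ∈ Y q, (2 : R) ^ j) • (A - A : Set G)) :=
    covByVAdd_sum fun q _ =>
      covByVAdd_smul (covByVAdd_sum_smul_of_eq_one_or_neg_one hA hK (X q) hσ) _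
  have hdigits : CovByVAdd G (K ^ ∑ j ∈ Finset.range m, (2 * n j + 5))
      (∑ q ∈ Q, (∑ j ∈ Y q, (2 : R) ^ j) • (A - A : Set G)) (A - A) :=
    (covByVAdd_sum_two_pow_smul_nsmul (R := R) hA hK m n).subset_left
      (sum_sum_smul_subset_sum_smul_nsmul hP.right_subset _ _)
  have hcov := (hblocks.trans hdigits).subset_left (hP.sum_smul_subset _ _ _)
  calc (#(∑ i ∈ S, ((∑ j ∈ Finset.range m with r i j, 2 ^ j) * σ i) • A) : ℝ)
      ≤ (∏ q ∈ Q, K ^ (#(X q) + 1)) *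
          (K ^ ∑ j ∈ Finset.range m, (2 * n j + 5)) * #(A - A) :=
        card_le_mul_card_of_covByVAdd (M := G) (by push_cast; exact hcov)
    _ ≤ (∏ q ∈ Q, K ^ (#(X q) + 1)) * (K ^ ∑ j ∈ Finset.range m, (2 * n j + 5)) *
          (K ^ (1 + 1) * #A) := by
        gcongr
        · exact hcov.nonneg
        · simpa using card_nsmul_sub_nsmul_le hA hK 1 1
    _ = K ^ (∑ q ∈ Q, (#(X q) + 1 + 2 * #(Y q)) + 5 * m + 2) * #A := by
        rw [hn, Finset.prod_pow_eq_pow_sum, Finset.sum_add_distrib (f := fun q => #(X q) + 1)]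
        ring

end BicliqueBound

section BlockPartition

lemma exists_coloring_card_fiber_le {α : Type*} (S : Finset α) {k : ℕ} (hk : 0 < k) :
    ∃ f : α → ℕ, (∀ a ∈ S, f a ∈ Finset.range (#S / k + 1)) ∧ ∀ i, #{a ∈ S | f a = i} ≤ k := by
  obtain ⟨e, he, hinj⟩ := S.finite_toSet.exists_injOn_of_encard_le
    (t := (Finset.range #S : Set ℕ)) (by
      rw [Set.encard_coe_eq_coe_finsetCard, Set.encard_coe_eq_coe_finsetCard, Finset.card_range])
  refine ⟨fun a => e a / k, fun a ha => ?_, fun i => ?_⟩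
  · have hea : e a < #S := by simpa using he ha
    exact Finset.mem_range_succ_iff.2 (Nat.div_le_div_right hea.le)
  · calc #{a ∈ S | e a / k = i} ≤ #(Finset.Ico (i * k) (i * k + k)) := by
          refine Finset.card_le_card_of_injOn e (fun a ha => ?_)
            (hinj.mono (Finset.coe_subset.2 (Finset.filter_subset _ _)))
          have hblock := (Nat.div_eq_iff hk).1 (Finset.mem_filter.1 ha).2
          rw [Finset.mem_coe, Finset.mem_Ico]
          omega
      _ = k := by rw [Nat.card_Ico, Nat.add_sub_cancel_left]

lemma IsBicliquePartition.of_fibers {α β γ : Type*} [DecidableEq α] [DecidableEq γ]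
    (r : α → β → Prop) [∀ a, DecidablePred (r a)] {S : Finset α} (T : Finset β) {f : α → γ}
    {I : Finset γ} (hf : ∀ a ∈ S, f a ∈ I) :
    IsBicliquePartition r S T (I.sigma fun i => {a ∈ S | f a = i}.powerset) Sigma.snd
      fun q => {b ∈ T | {a ∈ S | f a = q.1 ∧ r a b} = q.2} where
  left_subset q hq :=
    (Finset.mem_powerset.1 (Finset.mem_sigma.1 hq).2).trans (Finset.filter_subset _ _)
  right_subset q _ := Finset.filter_subset _ _
  rel q _ a ha b hb := by
    rw [← (Finset.mem_filter.1 hb).2] at ha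
    exact (Finset.mem_filter.1 ha).2.2
  existsUnique a ha b hb hab := by
    refine ⟨⟨f a, {a' ∈ S | f a' = f a ∧ r a' b}⟩, ⟨?_, ?_, ?_⟩, ?_⟩
    · refine Finset.mem_sigma.2 ⟨hf a ha, Finset.mem_powerset.2 ?_⟩
      exact Finset.monotone_filter_right _ fun _ _ h => h.1
    · exact Finset.mem_filter.2 ⟨ha, rfl, hab⟩
    · exact Finset.mem_filter.2 ⟨hb, rfl⟩
    · rintro ⟨i, P⟩ ⟨hq, haP, hbP⟩
      obtain rfl : f a = i :=
        (Finset.mem_filter.1 (Finset.mem_powerset.1 (Finset.mem_sigma.1 hq).2 haP)).2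
      obtain rfl : {a' ∈ S | f a' = f a ∧ r a' b} = P := (Finset.mem_filter.1 hbP).2
      rfl

lemma exists_isBicliquePartition {α β : Type*} (r : α → β → Prop) (S : Finset α) (T : Finset β)
    {k : ℕ} (hk : 0 < k) :
    ∃ (Q : Finset ((_ : ℕ) × Finset α)) (X : (_ : ℕ) × Finset α → Finset α)
      (Y : (_ : ℕ) × Finset α → Finset β), IsBicliquePartition r S T Q X Y ∧
        #Q ≤ (#S / k + 1) * 2 ^ k ∧ ∑ q ∈ Q, #(X q) ≤ (#S / k + 1) * (2 ^ k * k) ∧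
        ∑ q ∈ Q, #(Y q) ≤ (#S / k + 1) * #T := by
  classical
  obtain ⟨f, hfS, hf⟩ := exists_coloring_card_fiber_le S hk
  have hpow (i) : #({a ∈ S | f a = i}.powerset) ≤ 2 ^ k := by
    rw [Finset.card_powerset]
    exact Nat.pow_le_pow_right two_pos (hf i)
  refine ⟨_, _, _, .of_fibers r T hfS, ?_, ?_, ?_⟩
  · rw [Finset.card_sigma]
    simpa using Finset.sum_le_card_nsmul (Finset.range (#S / k + 1)) _ _ fun i _ => hpow i
  · have hblock (i) : ∑ P ∈ {a ∈ S | f a = i}.powerset, #P ≤ 2 ^ k * k :=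
      (Finset.sum_le_card_nsmul _ _ k fun P hP =>
        (Finset.card_le_card (Finset.mem_powerset.1 hP)).trans (hf i)).trans
          (Nat.mul_le_mul_right k (hpow i))
    rw [Finset.sum_sigma]
    simpa using Finset.sum_le_card_nsmul (Finset.range (#S / k + 1)) _ _ fun i _ => hblock i
  · have hfibers (i) : ∑ P ∈ {a ∈ S | f a = i}.powerset,
        #{b ∈ T | {a ∈ S | f a = i ∧ r a b} = P} = #T := by
      refine (Finset.card_eq_sum_card_fiberwise fun b _ => ?_).symm
      exact Finset.mem_powerset.2 (Finset.monotone_filter_right _ fun _ _ h => h.1)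
    rw [Finset.sum_sigma]
    simp [hfibers]

end BlockPartition

section BinaryDigits

lemma exists_sign_eq_sum_testBit_mul {l : ℤ} {m : ℕ} (hl : |l| < 2 ^ m) :
    ∃ ε : ℤ, (ε = 1 ∨ ε = -1) ∧
      l = (∑ j ∈ Finset.range m with l.natAbs.testBit j, 2 ^ j) * ε := by
  have hdigits : ∑ j ∈ Finset.range m with l.natAbs.testBit j, 2 ^ j = l.natAbs := by
    have hfilter : {j ∈ Finset.range m | l.natAbs.testBit j} = l.natAbs.bitIndices.toFinset := by
      ext j
      simp only [Finset.mem_filter, Finset.mem_range, List.mem_toFinset, Nat.mem_bitIndices]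
      refine ⟨And.right, fun hj => ⟨?_, hj⟩⟩
      rw [Int.abs_eq_natAbs] at hl
      exact (Nat.pow_lt_pow_iff_right one_lt_two).1
        ((Nat.ge_two_pow_of_testBit hj).trans_lt (mod_cast hl))
    rw [hfilter, Finset.sum_toFinset_bitIndices_two_pow]
  have hcast : ∑ j ∈ Finset.range m with l.natAbs.testBit j, (2 : ℤ) ^ j = l.natAbs := by
    exact_mod_cast hdigits
  rw [hcast]
  rcases Int.natAbs_eq l with h | h
  · exact ⟨1, .inl rfl, by rw [mul_one]; exact h⟩
  · exact ⟨-1, .inr rfl, by rw [mul_neg_one]; exact h⟩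

-- The dilates are images because `open Pointwise` reads `lam i • A` as an iterated sumset.
theorem card_sum_image_zsmul_le {G ι : Type*} [AddCommGroup G] [DecidableEq G] [Fintype ι]
    {A : Finset G} {K : ℝ} (hA : A.Nonempty) (hK1 : 1 ≤ K) (hK : (#(A + A) : ℝ) ≤ K * #A)
    {m k : ℕ} (hk : 0 < k) {lam : ι → ℤ} (hlam : ∀ i, |lam i| < 2 ^ m) :
    (#(∑ i, A.image (lam i • ·)) : ℝ) ≤
      K ^ ((min m (Fintype.card ι) / k + 1) * (2 * max m (Fintype.card ι) + (2 * k + 1) * 2 ^ k) +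
        5 * max m (Fintype.card ι) + 2) * #A := by
  have hmono {e e' : ℕ} (h : e ≤ e') : K ^ e * #A ≤ K ^ e' * #A := by gcongr
  choose σ hσ hdigits using fun i => exists_sign_eq_sum_testBit_mul (hlam i)
  have hsum : ∑ i, A.image (lam i • ·) = ∑ i, A.image
      (((∑ j ∈ Finset.range m with (lam i).natAbs.testBit j, 2 ^ j) * σ i) • ·) := by
    simp only [← hdigits]
  rw [hsum]
  set h := Fintype.card ι with hh
  rcases le_total m h with hle | hle
  · obtain ⟨Q, X, Y, hP, hQ, hX, hY⟩ := exists_isBicliquePartition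
      (fun j i => (lam i).natAbs.testBit j) (Finset.range m) Finset.univ hk
    rw [Finset.card_range] at hQ hX hY
    rw [Finset.card_univ, ← hh] at hY
    refine (card_sum_smul_le_of_isBicliquePartition hP.swap hA hK hσ).trans (hmono ?_)
    rw [min_eq_left hle, max_eq_right hle, Finset.sum_add_distrib, Finset.sum_add_distrib,
      ← Finset.mul_sum, Finset.sum_const, smul_eq_mul, mul_one]
    linarith [Nat.zero_le ((m / k + 1) * h)]
  · obtain ⟨Q, X, Y, hP, hQ, hX, hY⟩ := exists_isBicliquePartition
      (fun i j => (lam i).natAbs.testBit j) Finset.univ (Finset.range m) hk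
    rw [Finset.card_range] at hY
    rw [Finset.card_univ, ← hh] at hQ hX hY
    refine (card_sum_smul_le_of_isBicliquePartition hP hA hK hσ).trans (hmono ?_)
    rw [min_eq_right hle, max_eq_left hle, Finset.sum_add_distrib, Finset.sum_add_distrib,
      ← Finset.mul_sum, Finset.sum_const, smul_eq_mul, mul_one]
    linarith [Nat.zero_le ((h / k + 1) * (2 ^ k * k))]

end BinaryDigits

section Estimates

lemma log_le_mul_of_natLog_le {k L : ℕ} (hk : Nat.log 2 L ≤ 2 * k + 1)
    (hL : 100 ≤ Real.log L) : Real.log L ≤ 1.5 * k := by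
  have hL0 : L ≠ 0 := by rintro rfl; norm_num at hL
  have hpow : L < 2 ^ (2 * k + 2) := Nat.lt_pow_of_log_lt one_lt_two (Nat.lt_succ_of_le hk)
  have hlog : Real.log L ≤ (2 * k + 2) * Real.log 2 := by
    have hmono := Real.log_le_log (mod_cast hL0.bot_lt) (Nat.cast_le (α := ℝ).2 hpow.le)
    simpa [Real.log_pow] using hmono
  nlinarith [Real.log_two_lt_d9]

lemma two_mul_add_one_mul_two_pow_le {k L : ℕ} (hk : 2 * k ≤ Nat.log 2 L) (hL : L ≠ 0) :
    (2 * k + 1) * 2 ^ k ≤ 2 * L := by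
  have hlt : k < 2 ^ k := Nat.lt_two_pow_self
  calc (2 * k + 1) * 2 ^ k ≤ (2 * 2 ^ k) * 2 ^ k := by gcongr; omega
    _ = 2 * 2 ^ (2 * k) := by ring
    _ ≤ 2 * L := by gcongr; exact Nat.pow_le_of_le_log hL hk

lemma exponent_le_mul_div_log {k s L : ℕ} (hk : 2 * k ≤ Nat.log 2 L)
    (hk' : Nat.log 2 L ≤ 2 * k + 1) (hL : 100 ≤ Real.log L) (hs : 10 * Real.log L ^ 2 ≤ s) :
    (((s / k + 1) * (2 * L + (2 * k + 1) * 2 ^ k) + 5 * L + 2 : ℕ) : ℝ) ≤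
      6.1 * (s * L / Real.log L) := by
  set l := Real.log L with hl
  have hL0 : L ≠ 0 := by rintro rfl; norm_num [hl] at hL
  have hL1 : (1 : ℝ) ≤ L := mod_cast Nat.one_le_iff_ne_zero.2 hL0
  have hlk : l ≤ 1.5 * k := log_le_mul_of_natLog_le hk' hL
  have hdiv : ((s / k : ℕ) : ℝ) ≤ 1.5 * s / l := by
    refine Nat.cast_div_le.trans ?_
    rw [div_le_div_iff₀ (by linarith) (by linarith)]
    nlinarith
  have hblock : (((2 * k + 1) * 2 ^ k : ℕ) : ℝ) ≤ 2 * L :=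
    mod_cast two_mul_add_one_mul_two_pow_le hk hL0
  have hsmall : 11 * (L : ℝ) ≤ 0.1 * (s * L / l) := by
    rw [← mul_div_assoc, le_div_iff₀ (by linarith)]
    have hls : 1000 * l ≤ s := by nlinarith
    nlinarith
  push_cast at hblock ⊢
  calc ((s / k : ℕ) + 1 : ℝ) * (2 * L + (2 * k + 1) * 2 ^ k) + 5 * L + 2
      ≤ (1.5 * s / l + 1) * (2 * L + 2 * L) + 5 * L + 2 * L := by gcongr; linarith
    _ = 6 * (s * L / l) + 11 * L := by ring
    _ ≤ 6.1 * (s * L / l) := by linarith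

lemma mul_div_log_max_le {r h : ℕ} (hr : 100 ≤ Real.log r) (hh : 100 ≤ Real.log h) :
    6.1 * (((r + 1) * h : ℝ) / Real.log (max (r + 1) h : ℕ)) ≤
      7 * r * h / Real.log (r + h) := by
  have hr' : (100 : ℝ) ≤ r := hr.trans (Real.log_le_self r.cast_nonneg)
  have hh' : (100 : ℝ) ≤ h := hh.trans (Real.log_le_self h.cast_nonneg)
  set L := max (r + 1) h
  have hrL : (r + 1 : ℝ) ≤ L := mod_cast le_max_left (r + 1) h
  have hhL : (h : ℝ) ≤ L := mod_cast le_max_right (r + 1) h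
  have hlogL : 100 ≤ Real.log L := hh.trans (Real.log_le_log (by linarith) hhL)
  have hlog : Real.log (r + h) ≤ 1.01 * Real.log L :=
    calc Real.log (r + h) ≤ Real.log (2 * L) := Real.log_le_log (by linarith) (by linarith)
      _ = Real.log 2 + Real.log L := Real.log_mul two_ne_zero (by linarith)
      _ ≤ 1.01 * Real.log L := by linarith [Real.log_two_lt_d9]
  have hrh : (r + 1 : ℝ) * h ≤ 1.01 * (r * h) := by nlinarith
  have hlog0 : 0 < Real.log (r + h) := Real.log_pos (by linarith)
  rw [← mul_div_assoc, div_le_div_iff₀ (by linarith) hlog0]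
  calc 6.1 * ((r + 1 : ℝ) * h) * Real.log (r + h)
      ≤ 6.1 * (1.01 * (r * h)) * (1.01 * Real.log L) := by gcongr
    _ = 6.22261 * r * h * Real.log L := by ring
    _ ≤ 7 * r * h * Real.log L := by gcongr; norm_num

lemma exists_exponent_le {r h : ℕ} (hr : 100 ≤ Real.log r) (hh : 100 ≤ Real.log h)
    (hmin : 10 * Real.log (max (r + 1) h : ℕ) ^ 2 ≤ (min (r + 1) h : ℕ)) :
    ∃ k, 0 < k ∧ (((min (r + 1) h / k + 1) * (2 * max (r + 1) h + (2 * k + 1) * 2 ^ k) +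
      5 * max (r + 1) h + 2 : ℕ) : ℝ) ≤ 7 * r * h / Real.log (r + h) := by
  have hh0 : (0 : ℝ) < h := by linarith [Real.log_le_self h.cast_nonneg]
  have hL : 100 ≤ Real.log (max (r + 1) h : ℕ) :=
    hh.trans (Real.log_le_log hh0 (mod_cast le_max_right _ _))
  obtain ⟨k, hk, hk'⟩ : ∃ k, 2 * k ≤ Nat.log 2 (max (r + 1) h) ∧
      Nat.log 2 (max (r + 1) h) ≤ 2 * k + 1 :=
    ⟨Nat.log 2 (max (r + 1) h) / 2, by omega, by omega⟩
  refine ⟨k, Nat.cast_pos (α := ℝ).1 (by linarith [log_le_mul_of_natLog_le hk' hL]), ?_⟩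
  refine (exponent_le_mul_div_log hk hk' hL hmin).trans ?_
  rw [← Nat.cast_mul, min_mul_max, Nat.cast_mul, Nat.cast_succ]
  exact mul_div_log_max_le hr hh

end Estimates

/-- Theorem 1.3 (main theorem): there is a threshold `N` such that for all integers
`r, h ≥ N` with `min (r+1) h ≥ 10 (ln max (r+1) h)^2`, any finite nonempty set `A` in an
abelian group with `|A+A| = K|A|` and nonzero `λᵢ` with `|λᵢ| ≤ 2^r` satisfies
`|λ₁·A + ⋯ + λ_h·A| ≤ K^(7rh/ln(r+h)) |A|`. -/
theorem sum_of_dilates_bound :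
    ∃ N : ℕ, ∀ r h : ℕ, N ≤ r → N ≤ h →
      (10 : ℝ) * Real.log (max (r + 1) h : ℕ) ^ 2 ≤ (min (r + 1) h : ℕ) →
      ∀ (G : Type) (_ : AddCommGroup G) (_ : DecidableEq G)
        (A : Finset G) (K : ℝ) (lam : Fin h → ℤ),
        A.Nonempty →
        (∀ i, lam i ≠ 0) →
        (∀ i, |lam i| ≤ 2 ^ r) →
        ((A + A).card : ℝ) = K * A.card →
        ((∑ i, dilate (lam i) A).card : ℝ) ≤
          K ^ ((7 * r * h : ℝ) / Real.log (r + h)) * A.card := by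
  have hlog (x : ℕ) (hx : ⌈Real.exp 100⌉₊ ≤ x) : 100 ≤ Real.log x :=
    have hx' : Real.exp 100 ≤ x := Nat.ceil_le.1 hx
    (Real.le_log_iff_exp_le ((Real.exp_pos _).trans_le hx')).2 hx'
  refine ⟨⌈Real.exp 100⌉₊, fun r h hr hh hmin G _ _ A K lam hA _ hlam hK => ?_⟩
  have hK1 : 1 ≤ K := by
    refine le_of_mul_le_mul_right ?_ (Nat.cast_pos (α := ℝ).2 hA.card_pos)
    rw [one_mul, ← hK]
    exact_mod_cast Finset.card_le_card_add_left hA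
  obtain ⟨k, hk, hexp⟩ := exists_exponent_le (hlog r hr) (hlog h hh) hmin
  have hcard := card_sum_image_zsmul_le hA hK1 hK.le hk fun i =>
    (hlam i).trans_lt (pow_lt_pow_right₀ one_lt_two r.lt_succ_self)
  rw [Fintype.card_fin] at hcard
  refine hcard.trans ?_
  gcongr ?_ * _
  rw [← Real.rpow_natCast]
  exact Real.rpow_le_rpow_of_exponent_le hK1 hexp
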